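/- arXiv:2601.03433 — 2 statements merged into one kernel-verified Lean document; each statement's English description precedes it below -/
import Mathlib

section
/- Let β ∈ [0,1]. For every sequence (G_n)_{n≥2} of finite simple graphs, where G_n has exactly n vertices and the edge density of G_n tends to β as n → ∞, one has limsup_{n→∞} P(G_n)/n⁵ ≤ max{ β^{3/2} − β², (1−β)^{3/2} − (1−β)² }. Moreover, there exists such a sequence (G_n) with edge density tending to β for which P(G_n)/n⁵ converges to max{ β^{3/2} − β², (1−β)^{3/2} − (1−β)² }. -/
open Finset SimpleGraph Filter
open scoped Classical

/-- `P G` is the number of ordered quintuples `(v₁,v₂,v₃,v₄,v₅)` of pairwise distinct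
vertices with `v₁v₂`, `v₂v₃` edges and `v₃v₄`, `v₄v₅` non-edges (labeled copies
of the path `P_{EENN}`). -/
noncomputable def P {n : ℕ} (G : SimpleGraph (Fin n)) : ℕ :=
  Finset.card <| (Finset.univ : Finset (Fin 5 → Fin n)).filter
    fun v =>
      Function.Injective v ∧
      G.Adj (v 0) (v 1) ∧ G.Adj (v 1) (v 2) ∧
      ¬ G.Adj (v 2) (v 3) ∧ ¬ G.Adj (v 3) (v 4)

/-- The edge density of an `n`-vertex graph: `m / (n choose 2)`. -/
noncomputable def density {n : ℕ} (G : SimpleGraph (Fin n)) : ℝ :=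
  (G.edgeFinset.card : ℝ) / (n.choose 2 : ℝ)

/-!
Counting by the middle vertex, `P G / n ^ 5` is at most the average of `f * g`, where `f x` and
`g x` are the normalized numbers of walks of length two from `x` in `G` and in its complement.
Let `A` be the normalized adjacency operator, `d = A 1` the normalized degree and `B` the density,
where `B ≥ 1 / 2` after passing to the complement if necessary; put `a = √B`, `c = 1 - B`. With
`z = A (2 * d - 1)` one has `f + g = z + c` and `f - g = d - c`, hence
`4 * f * g = z * (z + 2 * c) + 2 * c * d - d ^ 2`. Since `-c ≤ z ≤ a * (2 * a - 1)`, the first term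
is at most `(2 - a) * max z 0`, which leaves the average of `z` over `{z ≥ 0}`. As `A` is
symmetric, that is the average of `2 * d - 1` against the image under `A` of an indicator function,
which is bounded by splitting the vertices into the two corresponding blocks and applying the
Ahlswede–Katona theorem to the first: a graph of density `B ≥ 1 / 2` has average `d ^ 2` at most
`a ^ 3`.

Equality holds asymptotically for a clique on `√β * n` vertices, or for the complement of a clique
on `√(1 - β) * n` vertices.
-/

section RealInequalities

theorem tangent_le_cube {a b : ℝ} (ha : 0 ≤ a) (hb : 0 ≤ b) :
    3 / 2 * b * a ^ 2 - b ^ 3 / 2 ≤ a ^ 3 := by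
  have : a ^ 3 - (3 / 2 * b * a ^ 2 - b ^ 3 / 2) = (a - b) ^ 2 * (a + b / 2) := by ring
  have : 0 ≤ (a - b) ^ 2 * (a + b / 2) := by positivity
  linarith

theorem sqrt_cube {x : ℝ} (hx : 0 ≤ x) : √x ^ 3 = x * √x := by
  rw [pow_succ, Real.sq_sqrt hx]

theorem sqrt_cube_add_sqrt_cube_le {x y : ℝ} (hx : 0 ≤ x) (hy : 0 ≤ y) :
    √x ^ 3 + √y ^ 3 ≤ √(x + y) ^ 3 := by
  rw [sqrt_cube hx, sqrt_cube hy, sqrt_cube (add_nonneg hx hy), add_mul]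
  gcongr <;> linarith

theorem mul_sq_sub_sq_le_cube_sub_cube {a b c : ℝ} (hba : b ≤ a) (hc : 0 ≤ c)
    (h : a ^ 2 + b ^ 2 = c ^ 2) : c * (a ^ 2 - b ^ 2) ≤ a ^ 3 - b ^ 3 := by
  have hac : a ≤ c := abs_le_of_sq_le_sq' (by nlinarith) hc |>.2
  have hbc : b ≤ c := hba.trans hac
  have factored : a ^ 3 - b ^ 3 - c * (a ^ 2 - b ^ 2) = (a - b) * ((c - a) * (c - b)) := by
    linear_combination (a - b) * h
  have := mul_nonneg (sub_nonneg.2 hba) (mul_nonneg (sub_nonneg.2 hac) (sub_nonneg.2 hbc))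
  linarith

theorem mul_two_mul_sub_le_sqrt_cube_sub {c e : ℝ} (hc : 0 ≤ c) (he : e ≤ c ^ 2)
    (h : c ^ 2 ≤ 2 * e) : c * (2 * e - c ^ 2) ≤ √e ^ 3 - √(c ^ 2 - e) ^ 3 := by
  have he0 : 0 ≤ e := by nlinarith
  have key := mul_sq_sub_sq_le_cube_sub_cube
    (Real.sqrt_le_sqrt (by linarith : c ^ 2 - e ≤ e)) hc
    (by rw [Real.sq_sqrt he0, Real.sq_sqrt (sub_nonneg.2 he)]; ring)
  rw [Real.sq_sqrt he0, Real.sq_sqrt (sub_nonneg.2 he)] at key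
  linarith

/- Adding a vertex joined to all `m` others, with `c ∈ {0, 1}` for its loop, changes `k ^ 2` pairs
into `k ^ 2 + 2 * m + c`. -/
theorem cube_add_le_sqrt_cube_of_dominating (m : ℕ) {k c : ℝ} (hk : 0 ≤ k) (hc : c = 0 ∨ c = 1)
    (hkm : k ≤ m) (hmk : (m : ℝ) ^ 2 ≤ 2 * k ^ 2) :
    k ^ 3 + 2 * k ^ 2 + m + (m + c) ^ 2 ≤ √(k ^ 2 + 2 * m + c) ^ 3 := by
  rcases Nat.eq_zero_or_pos m with rfl | hm
  · obtain rfl : k = 0 := le_antisymm (by simpa using hkm) hk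
    rcases hc with rfl | rfl <;> simp
  have hm : (1 : ℝ) ≤ m := by exact_mod_cast hm
  have hc0 : 0 ≤ c := by rcases hc with rfl | rfl <;> norm_num
  have mixed : 2 * k ^ 2 + (m : ℝ) ^ 2 ≤ 3 * m * k := by
    have : (m : ℝ) ≤ 2 * k := abs_le_of_sq_le_sq' (by nlinarith) (by linarith) |>.2
    nlinarith [mul_nonneg (sub_nonneg.2 this) (sub_nonneg.2 hkm)]
  have tangent := tangent_le_cube (Real.sqrt_nonneg (k ^ 2 + 2 * m + c))
    (by linarith : 0 ≤ k + 1)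
  rw [Real.sq_sqrt (by positivity)] at tangent
  rcases hc with rfl | rfl <;> nlinarith

theorem convexOn_one_sub_cube : ConvexOn ℝ (Set.Iic 1) fun x : ℝ => (1 - x) ^ 3 := by
  have := (convexOn_pow 3).comp_affineMap (AffineMap.lineMap (1 : ℝ) 0)
  refine (this.subset (fun x hx => ?_) (convex_Iic 1)).congr fun x _ => ?_
  · simpa [AffineMap.lineMap_apply] using hx
  · simp [AffineMap.lineMap_apply, sub_eq_neg_add]

theorem one_sub_cube_div_le {x b t : ℝ} (hb : 0 ≤ b) (hb' : b ≤ 2 / 3) (hbx : b ≤ x)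
    (hxb : x ^ 2 ≤ 2 * b ^ 2) (ht : 0 ≤ t) (ht2 : t ^ 2 = 1 / 2) :
    (1 - x) ^ 3 / 16 ≤ t ^ 3 - b ^ 3 - (1 + x) / 2 * (1 / 2 - b ^ 2) := by
  have ht_lower : 707 / 1000 ≤ t := by nlinarith
  have ht_upper : t ≤ 7072 / 10000 := by nlinarith
  have ht3 : t ^ 3 = t / 2 := by linear_combination t * ht2
  have hx_upper : x ≤ 2 * t * b :=
    abs_le_of_sq_le_sq' (by rw [mul_pow, mul_pow, ht2]; linarith) (by positivity) |>.2
  let gap (u : ℝ) : ℝ := (1 - u) ^ 3 / 16 + b ^ 3 + (1 + u) / 2 * (1 / 2 - b ^ 2) - t ^ 3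
  have gap_convex : ConvexOn ℝ (Set.Iic 1) gap := by
    have linear_convex := (convexOn_id (convex_Iic (1 : ℝ))).smul
      (by nlinarith : 0 ≤ (1 / 2 - b ^ 2) / 2)
    refine (((convexOn_one_sub_cube.smul (by norm_num : (0 : ℝ) ≤ 1 / 16)).add
      linear_convex).add_const (b ^ 3 + (1 / 2 - b ^ 2) / 2 - t ^ 3)).congr fun u _ => ?_
    simp only [gap, smul_eq_mul, Pi.add_apply, id_eq]
    ring
  have left_end : gap b ≤ 0 := by
    simp only [gap, ht3]
    nlinarith [mul_nonneg hb (sq_nonneg (b - 1 / 4)), mul_nonneg hb (sub_nonneg.2 hb'),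
      sq_nonneg (b - 1 / 4), mul_nonneg (mul_nonneg hb hb) (sub_nonneg.2 hb')]
  have right_end : gap (2 * t * b) ≤ 0 := by
    have expand : gap (2 * t * b) =
        5 / 16 - t / 2 + t * b / 8 - b ^ 2 / 8 + (1 - 5 / 4 * t) * b ^ 3 := by
      simp only [gap]
      linear_combination (3 / 4 * b ^ 2 - t * b ^ 3 / 2 - t) * ht2
    have antitone_in_t : gap (2 * t * b) ≤
        5 / 16 - 707 / 2000 + 707 / 8000 * b - b ^ 2 / 8 + (1 - 707 / 800) * b ^ 3 := by
      have : 0 ≤ 1 / 2 - b / 8 + 5 / 4 * b ^ 3 := by linarith [pow_nonneg hb 3]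
      rw [expand]
      linarith [mul_nonneg (sub_nonneg.2 ht_lower) this]
    nlinarith [mul_nonneg (sub_nonneg.2 hb') (sq_nonneg (b - 1 / 5))]
  have := gap_convex.le_max_of_mem_Icc (Set.mem_Iic.2 (by linarith : b ≤ 1))
    (Set.mem_Iic.2 (by nlinarith : 2 * t * b ≤ 1)) ⟨hbx, hx_upper⟩
  have gap_nonpos : gap x ≤ 0 := this.trans (max_le left_end right_end)
  simp only [gap] at gap_nonpos
  linarith

/- Here and below `x` and `y` are the relative sizes of two blocks of vertices, and `a ^ 2` is the
normalized number of related pairs: `b ^ 2` (later `α`) inside the first block, `x * g` from the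
first block to the second and `y * h` inside the second. -/
theorem twoBlock_le_of_two_thirds_le {x y g h a b : ℝ} (hx : 0 ≤ x) (hx1 : x ≤ 1)
    (hy : 0 ≤ y) (hg : 0 ≤ g) (hh : 0 ≤ h) (ha : 0 ≤ a) (hb : 2 / 3 ≤ b)
    (hab : a ^ 2 = b ^ 2 + 2 * (x * g) + y * h) :
    x * g * (1 + x - g) + y * h * (1 - h) ≤ a ^ 3 - b ^ 3 := by
  have : 0 ≤ x * g := mul_nonneg hx hg
  have : 0 ≤ y * h := mul_nonneg hy hh
  have tangent := tangent_le_cube ha (by linarith : 0 ≤ b)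
  calc x * g * (1 + x - g) + y * h * (1 - h) ≤ x * g * 2 + y * h * 1 := by gcongr <;> linarith
    _ = (2 * (x * g) + y * h) * 1 := by ring
    _ ≤ (2 * (x * g) + y * h) * (3 / 2 * b) := by gcongr; linarith
    _ = 3 / 2 * b * a ^ 2 - b ^ 3 / 2 - b ^ 3 := by rw [hab]; ring
    _ ≤ a ^ 3 - b ^ 3 := by linarith

theorem exists_twoBlock_le_of_le_two_thirds {x y g h a b : ℝ} (hx : 0 ≤ x) (hy : 0 ≤ y)
    (hxy : x + y = 1) (hg : 0 ≤ g) (ha : 0 ≤ a) (hb : 0 ≤ b) (hb' : b ≤ 2 / 3)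
    (hbx : b ≤ x) (hxb : x ^ 2 ≤ 2 * b ^ 2) (hab : a ^ 2 = b ^ 2 + 2 * (x * g) + y * h) :
    ∃ μ ∈ Set.Icc 0 (2 * y),
      x * g * (1 + x - g) + y * h * (1 - h) ≤ a ^ 3 - b ^ 3 + μ * (1 / 2 - a ^ 2) := by
  obtain rfl : y = 1 - x := by linarith
  obtain ⟨t, ht, ht2⟩ : ∃ t : ℝ, 0 ≤ t ∧ t ^ 2 = 1 / 2 :=
    ⟨√(1 / 2), Real.sqrt_nonneg _, Real.sq_sqrt (by norm_num)⟩
  have ht_lower : 707 / 1000 ≤ t := by nlinarith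
  have ht_upper : t ≤ 7072 / 10000 := by nlinarith
  have hx_upper : x ≤ 19 / 20 := by nlinarith
  have tangent := tangent_le_cube ha ht
  have gap := one_sub_cube_div_le hb hb' hbx hxb ht ht2
  have drop_square : x * g * (1 + x - g) ≤ x * g * (1 + x) := by
    gcongr
    linarith
  have complete_square :
      (1 - x) * h * (1 - h) ≤ (1 + x) / 2 * ((1 - x) * h) + (1 - x) ^ 3 / 16 := by
    linarith [mul_nonneg hy (sq_nonneg (h - (1 - x) / 4))]
  refine ⟨3 / 2 * t - (1 + x) / 2, ⟨by linarith, by linarith⟩, ?_⟩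
  have ht3 : t ^ 3 = t / 2 := by linear_combination t * ht2
  rw [ht3] at tangent gap
  rw [hab] at tangent ⊢
  linarith

theorem exists_twoBlock_le {x y g h a b : ℝ} (hx : 0 ≤ x) (hy : 0 ≤ y) (hxy : x + y = 1)
    (hg : 0 ≤ g) (hh : 0 ≤ h) (ha : 0 ≤ a) (hb : 0 ≤ b) (hbx : b ≤ x)
    (hxb : x ^ 2 ≤ 2 * b ^ 2) (hab : a ^ 2 = b ^ 2 + 2 * (x * g) + y * h) :
    ∃ μ ∈ Set.Icc 0 (2 * y),
      x * g * (1 + x - g) + y * h * (1 - h) ≤ a ^ 3 - b ^ 3 + μ * (1 / 2 - a ^ 2) := by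
  rcases le_total b (2 / 3) with hb' | hb'
  · exact exists_twoBlock_le_of_le_two_thirds hx hy hxy hg ha hb hb' hbx hxb hab
  · refine ⟨0, ⟨le_rfl, by linarith⟩, ?_⟩
    simpa using twoBlock_le_of_two_thirds_le hx (by linarith) hy hg hh ha hb' hab

theorem twoBlock_le_of_dense {x y g h α a Q : ℝ} (hx : 0 ≤ x) (hy : 0 ≤ y) (hxy : x + y = 1)
    (hg : 0 ≤ g) (hh : 0 ≤ h) (hα : 0 ≤ α) (hαx : α ≤ x ^ 2) (hdense : x ^ 2 ≤ 2 * α)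
    (ha : 0 ≤ a) (ha2 : 1 / 2 ≤ a ^ 2) (hab : a ^ 2 = α + 2 * (x * g) + y * h)
    (hQ : Q ≤ √α ^ 3) :
    Q + x * g * (1 + x - g) + y * h * (1 - h) ≤ a ^ 3 := by
  obtain ⟨μ, ⟨hμ, -⟩, h_le⟩ := exists_twoBlock_le hx hy hxy hg hh ha (Real.sqrt_nonneg α)
    ((Real.sqrt_le_left hx).2 hαx) (by rwa [Real.sq_sqrt hα]) (by rwa [Real.sq_sqrt hα])
  linarith [mul_nonneg hμ (sub_nonneg.2 ha2)]

/- The bound for `√(1 - a ^ 2)` and the complementary densities `y - g`, `y - h`, `x ^ 2 - α`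
transfers to `a` through `a ^ 3 ≥ √(1 - a ^ 2) ^ 3 + (2 * a ^ 2 - 1)`. -/
theorem twoBlock_le_of_sparse {x y g h α a Q : ℝ} (hx : 0 ≤ x) (hy : 0 ≤ y) (hxy : x + y = 1)
    (hgy : g ≤ y) (hhy : h ≤ y) (hα : 0 ≤ α) (hsparse : 2 * α ≤ x ^ 2)
    (ha : 0 ≤ a) (ha1 : a ≤ 1) (ha2 : 1 / 2 ≤ a ^ 2) (hab : a ^ 2 = α + 2 * (x * g) + y * h)
    (hQ : Q ≤ 2 * α * x - x ^ 3 + √(x ^ 2 - α) ^ 3) :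
    Q + x * g * (1 + x - g) + y * h * (1 - h) ≤ a ^ 3 := by
  have hz : 0 ≤ x ^ 2 - α := by linarith
  have ha' : 0 ≤ 1 - a ^ 2 := sub_nonneg.2 (pow_le_one₀ ha ha1)
  obtain rfl : y = 1 - x := by linarith
  obtain ⟨μ, ⟨-, hμ⟩, h_le⟩ := exists_twoBlock_le (a := √(1 - a ^ 2)) (b := √(x ^ 2 - α))
    hx hy hxy (sub_nonneg.2 hgy) (sub_nonneg.2 hhy) (Real.sqrt_nonneg _) (Real.sqrt_nonneg _)
    ((Real.sqrt_le_left hx).2 (by linarith)) (by rw [Real.sq_sqrt hz]; linarith)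
    (by rw [Real.sq_sqrt hz, Real.sq_sqrt ha', hab]; ring)
  have transfer := mul_sq_sub_sq_le_cube_sub_cube ((Real.sqrt_le_left ha).2 (by linarith))
    zero_le_one (by rw [Real.sq_sqrt ha']; ring : a ^ 2 + √(1 - a ^ 2) ^ 2 = 1 ^ 2)
  rw [Real.sq_sqrt ha'] at transfer h_le
  have hμ_le : μ * (1 / 2 - (1 - a ^ 2)) ≤ 2 * (1 - x) * (1 / 2 - (1 - a ^ 2)) :=
    mul_le_mul_of_nonneg_right hμ (by linarith)
  rw [hab] at hμ_le h_le transfer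
  linarith

theorem two_mul_sub_le_of_two_mul_le_sq_add_sq {a t D : ℝ} (ha2 : 1 / 2 ≤ a ^ 2)
    (hDa : D ≤ a ^ 2) (hDt : D ≤ t) (hD : 2 * D ≤ t ^ 2 + a ^ 2) :
    2 * D - t ≤ a * (2 * a - 1) := by
  rcases le_total a t with h | h
  · linarith
  rcases le_total t (2 * a ^ 2 - a) with h' | h'
  · linarith
  · nlinarith [mul_nonneg (sub_nonneg.2 h) (by linarith : 0 ≤ t + a - 1)]

end RealInequalities

section PairCounts

variable {V : Type*}

/-- The number of `R`-neighbours of `x` in `s`, as a real number; `x` counts if `R x x`. -/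
noncomputable def degIn (R : V → V → Prop) (s : Finset V) (x : V) : ℝ := #{y ∈ s | R x y}

/-- The number of ordered pairs of `s` related by `R`, loops included. -/
noncomputable def pairCount (R : V → V → Prop) (s : Finset V) : ℝ := ∑ x ∈ s, degIn R s x

/-- The number of ordered cherries of `R` in `s`, which the Ahlswede–Katona theorem bounds in
terms of `pairCount R s`. -/
noncomputable def degSqSum (R : V → V → Prop) (s : Finset V) : ℝ := ∑ x ∈ s, degIn R s x ^ 2

theorem degIn_nonneg (R : V → V → Prop) (s : Finset V) (x : V) : 0 ≤ degIn R s x :=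
  Nat.cast_nonneg _

theorem degIn_le_card (R : V → V → Prop) (s : Finset V) (x : V) : degIn R s x ≤ #s :=
  Nat.cast_le.2 (card_filter_le _ _)

theorem pairCount_nonneg (R : V → V → Prop) (s : Finset V) : 0 ≤ pairCount R s :=
  sum_nonneg fun _ _ => degIn_nonneg _ _ _

theorem pairCount_le_card_sq (R : V → V → Prop) (s : Finset V) : pairCount R s ≤ (#s : ℝ) ^ 2 :=
  (sum_le_card_nsmul s _ _ fun x _ => degIn_le_card R s x).trans_eq (by rw [nsmul_eq_mul, sq])

theorem degIn_compl (R : V → V → Prop) (s : Finset V) (x : V) :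
    degIn Rᶜ s x = #s - degIn R s x := by
  rw [eq_sub_iff_add_eq', degIn, degIn, ← card_filter_add_card_filter_not (s := s) (R x),
    Nat.cast_add]
  simp only [Pi.compl_apply, compl_iff_not]

theorem pairCount_compl (R : V → V → Prop) (s : Finset V) :
    pairCount Rᶜ s = (#s : ℝ) ^ 2 - pairCount R s := by
  simp only [pairCount, degIn_compl, sum_sub_distrib, sum_const, nsmul_eq_mul, sq]

theorem degSqSum_compl (R : V → V → Prop) (s : Finset V) :
    degSqSum Rᶜ s = (#s : ℝ) ^ 3 - 2 * #s * pairCount R s + degSqSum R s := by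
  simp only [degSqSum, pairCount, degIn_compl, sub_sq, sum_add_distrib, sum_sub_distrib, sum_const,
    nsmul_eq_mul, ← mul_sum]
  ring

theorem degIn_singleton (R : V → V → Prop) (v x : V) :
    degIn R {v} x = if R x v then 1 else 0 := by
  simp [degIn, filter_singleton, apply_ite card]

theorem degIn_insert (R : V → V → Prop) {s : Finset V} {v : V} (hv : v ∉ s) (x : V) :
    degIn R (insert v s) x = degIn R {v} x + degIn R s x := by
  rw [degIn, degIn, degIn, insert_eq, filter_union, card_union_of_disjoint, Nat.cast_add]
  exact disjoint_filter_filter (disjoint_singleton_left.2 hv)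

theorem degIn_eq_card_mul {R : V → V → Prop} {s : Finset V} {v : V} {r : ℝ}
    (h : ∀ x ∈ s, degIn R {x} v = r) : degIn R s v = #s * r := by
  rw [degIn, natCast_card_filter, ← nsmul_eq_mul, ← sum_const]
  exact sum_congr rfl fun x hx => by rw [← h x hx, degIn_singleton]

variable {R : V → V → Prop} [Std.Symm R] {s : Finset V} {v : V} {r : ℝ}

theorem degIn_singleton_comm (x y : V) : degIn R {x} y = degIn R {y} x := by
  simp only [degIn_singleton, comm (r := R) (a := x)]

theorem pairCount_insert (hv : v ∉ s) (h : ∀ x ∈ s, degIn R {v} x = r) :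
    pairCount R (insert v s) = pairCount R s + 2 * #s * r + degIn R {v} v := by
  have hdeg_v := degIn_eq_card_mul fun x hx => (degIn_singleton_comm (R := R) x v).trans (h x hx)
  have hsum : ∑ x ∈ s, degIn R (insert v s) x = ∑ x ∈ s, (r + degIn R s x) :=
    sum_congr rfl fun x hx => by rw [degIn_insert R hv, h x hx]
  rw [pairCount, sum_insert hv, hsum, degIn_insert R hv, hdeg_v, sum_add_distrib, sum_const,
    nsmul_eq_mul, ← pairCount]
  ring

theorem degSqSum_insert (hv : v ∉ s) (h : ∀ x ∈ s, degIn R {v} x = r) :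
    degSqSum R (insert v s) = degSqSum R s + 2 * r * pairCount R s + #s * r ^ 2
      + (#s * r + degIn R {v} v) ^ 2 := by
  have hdeg_v := degIn_eq_card_mul fun x hx => (degIn_singleton_comm (R := R) x v).trans (h x hx)
  have hsum : ∑ x ∈ s, degIn R (insert v s) x ^ 2 = ∑ x ∈ s, (r + degIn R s x) ^ 2 :=
    sum_congr rfl fun x hx => by rw [degIn_insert R hv, h x hx]
  rw [degSqSum, sum_insert hv, hsum, degIn_insert R hv, hdeg_v]
  simp only [degSqSum, pairCount, add_sq, sum_add_distrib, sum_const, nsmul_eq_mul, ← mul_sum]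
  ring

end PairCounts

section EdgeMove

variable {V : Type*}

/-- The relation obtained from `R` by replacing the edge `vw` with the edge `uw`. -/
def moveEdge (R : V → V → Prop) (u v w : V) : V → V → Prop :=
  fun x y => s(x, y) = s(u, w) ∨ (R x y ∧ s(x, y) ≠ s(v, w))

variable {R : V → V → Prop} [Std.Symm R] {s : Finset V} {u v w : V}

instance : Std.Symm (moveEdge R u v w) where
  symm x y h := by
    rw [moveEdge, Sym2.eq_swap, comm (r := R)]
    exact h

theorem degIn_moveEdge (hu : u ∈ s) (hv : v ∈ s) (hw : w ∈ s) (huv : u ≠ v) (huw : u ≠ w)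
    (hvw : v ≠ w) (hRuw : ¬ R u w) (hRvw : R v w) (x : V) :
    degIn (moveEdge R u v w) s x
      = degIn R s x + (if x = u then 1 else 0) - (if x = v then 1 else 0) := by
  have hRwu : ¬ R w u := fun h => hRuw (symm h)
  have hRwv : R w v := symm hRvw
  have indicator (y : V) : (if moveEdge R u v w x y then (1 : ℝ) else 0) = (if R x y then 1 else 0)
      + (if x = u then 1 else 0) * (if y = w then 1 else 0)
      + (if x = w then 1 else 0) * (if y = u then 1 else 0)
      - (if x = v then 1 else 0) * (if y = w then 1 else 0)
      - (if x = w then 1 else 0) * (if y = v then 1 else 0) := by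
    simp only [moveEdge, Sym2.eq_iff, ne_eq]
    grind
  simp only [degIn, natCast_card_filter, indicator, sum_add_distrib, sum_sub_distrib, ← mul_sum,
    sum_ite_eq', hu, hv, hw, if_true]
  ring

theorem pairCount_moveEdge (hu : u ∈ s) (hv : v ∈ s) (hw : w ∈ s) (huv : u ≠ v) (huw : u ≠ w)
    (hvw : v ≠ w) (hRuw : ¬ R u w) (hRvw : R v w) :
    pairCount (moveEdge R u v w) s = pairCount R s := by
  simp only [pairCount, degIn_moveEdge hu hv hw huv huw hvw hRuw hRvw, sum_add_distrib,
    sum_sub_distrib, sum_ite_eq', hu, hv, if_true, add_sub_cancel_right]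

theorem degSqSum_moveEdge (hu : u ∈ s) (hv : v ∈ s) (hw : w ∈ s) (huv : u ≠ v) (huw : u ≠ w)
    (hvw : v ≠ w) (hRuw : ¬ R u w) (hRvw : R v w) :
    degSqSum (moveEdge R u v w) s = degSqSum R s + 2 * (degIn R s u - degIn R s v) + 2 := by
  have square (x : V) : (degIn R s x + (if x = u then 1 else 0) - (if x = v then 1 else 0)) ^ 2 =
      degIn R s x ^ 2 + (if x = u then 2 * degIn R s x + 1 else 0)
        + (if x = v then 1 - 2 * degIn R s x else 0) := by
    split_ifs with hxu hxv
    · exact absurd (hxu.symm.trans hxv) huv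
    all_goals ring
  simp only [degSqSum, degIn_moveEdge hu hv hw huv huw hvw hRuw hRvw, square, sum_add_distrib,
    sum_ite_eq', hu, hv, if_true]
  ring

theorem exists_dominating_or_isolated (hs : s.Nonempty)
    (hmax : ∀ (R' : V → V → Prop) [Std.Symm R'], pairCount R' s = pairCount R s →
      degSqSum R' s ≤ degSqSum R s) :
    ∃ v ∈ s, (∀ y ∈ s, y ≠ v → R v y) ∨ (∀ y ∈ s, y ≠ v → ¬ R v y) := by
  obtain ⟨u, hu, hu_max⟩ := exists_max_image s (degIn R s) hs
  by_contra! h_none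
  obtain ⟨⟨w, hw, hwu, hRuw⟩, -⟩ := h_none u hu
  obtain ⟨-, v, hv, hvw, hRwv⟩ := h_none w hw
  have huv : u ≠ v := by
    rintro rfl
    exact hRuw (symm hRwv)
  have h_pairs := pairCount_moveEdge hu hv hw huv hwu.symm hvw hRuw (symm hRwv)
  have h_cherries := degSqSum_moveEdge hu hv hw huv hwu.symm hvw hRuw (symm hRwv)
  linarith [hmax _ h_pairs, hu_max v hv]

end EdgeMove

section AhlswedeKatona

variable {V : Type*} {R : V → V → Prop} {s : Finset V} {v : V}

theorem degSqSum_le_of_compl (hdense : (#s : ℝ) ^ 2 ≤ 2 * pairCount R s)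
    (h : degSqSum Rᶜ s ≤ √(pairCount Rᶜ s) ^ 3) : degSqSum R s ≤ √(pairCount R s) ^ 3 := by
  have := mul_two_mul_sub_le_sqrt_cube_sub (Nat.cast_nonneg #s) (pairCount_le_card_sq R s) hdense
  rw [degSqSum_compl, pairCount_compl] at h
  linarith

theorem degSqSum_insert_le_of_isolated [Std.Symm R] (hv : v ∉ s) (h_isolated : ∀ y ∈ s, ¬ R v y)
    (h : degSqSum R s ≤ √(pairCount R s) ^ 3) :
    degSqSum R (insert v s) ≤ √(pairCount R (insert v s)) ^ 3 := by
  have h_deg : ∀ y ∈ s, degIn R {v} y = 0 := fun y hy => by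
    rw [degIn_singleton_comm, degIn_singleton, if_neg (h_isolated y hy)]
  have h_loop : degIn R {v} v ^ 2 = √(degIn R {v} v) ^ 3 := by
    rw [degIn_singleton]
    split_ifs <;> simp
  have h_cubes := sqrt_cube_add_sqrt_cube_le (pairCount_nonneg R s) (degIn_nonneg R {v} v)
  rw [pairCount_insert hv h_deg, degSqSum_insert hv h_deg]
  simp only [mul_zero, zero_mul, add_zero, zero_add, zero_pow two_ne_zero]
  linarith

theorem degSqSum_insert_le_of_dominating [Std.Symm R] (hv : v ∉ s) (h_dominating : ∀ y ∈ s, R v y)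
    (hdense : (#s : ℝ) ^ 2 ≤ 2 * pairCount R s) (h : degSqSum R s ≤ √(pairCount R s) ^ 3) :
    degSqSum R (insert v s) ≤ √(pairCount R (insert v s)) ^ 3 := by
  have h_deg : ∀ y ∈ s, degIn R {v} y = 1 := fun y hy => by
    rw [degIn_singleton_comm, degIn_singleton, if_pos (h_dominating y hy)]
  have h_loop : degIn R {v} v = 0 ∨ degIn R {v} v = 1 := by
    rw [degIn_singleton]
    split_ifs <;> simp
  have h_step := cube_add_le_sqrt_cube_of_dominating #s (Real.sqrt_nonneg (pairCount R s)) h_loop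
    ((Real.sqrt_le_left (Nat.cast_nonneg _)).2 (pairCount_le_card_sq R s))
    (by rwa [Real.sq_sqrt (pairCount_nonneg R s)])
  rw [Real.sq_sqrt (pairCount_nonneg R s)] at h_step
  rw [pairCount_insert hv h_deg, degSqSum_insert hv h_deg]
  simp only [mul_one, one_pow]
  linarith

theorem dense_of_dense_insert_of_isolated [Std.Symm R] (hv : v ∉ s)
    (h_isolated : ∀ y ∈ s, ¬ R v y)
    (hdense : (#(insert v s) : ℝ) ^ 2 ≤ 2 * pairCount R (insert v s)) :
    (#s : ℝ) ^ 2 ≤ 2 * pairCount R s := by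
  rcases s.eq_empty_or_nonempty with rfl | hs
  · simp [pairCount]
  have h_deg : ∀ y ∈ s, degIn R {v} y = 0 := fun y hy => by
    rw [degIn_singleton_comm, degIn_singleton, if_neg (h_isolated y hy)]
  have h_loop : degIn R {v} v ≤ 1 := by simpa using degIn_le_card R {v} v
  have h_card : (1 : ℝ) ≤ #s := by exact_mod_cast hs.card_pos
  rw [pairCount_insert hv h_deg, card_insert_of_notMem hv] at hdense
  push_cast at hdense
  linarith

theorem exists_maximal_degSqSum [Finite V] (R : V → V → Prop) [Std.Symm R] (s : Finset V) :
    ∃ R₁ : V → V → Prop, Std.Symm R₁ ∧ pairCount R₁ s = pairCount R s ∧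
      ∀ (R' : V → V → Prop) [Std.Symm R'], pairCount R' s = pairCount R s →
        degSqSum R' s ≤ degSqSum R₁ s := by
  obtain ⟨R₁, ⟨hR₁, h_eq⟩, h_max⟩ := Set.exists_max_image
    {R' : V → V → Prop | Std.Symm R' ∧ pairCount R' s = pairCount R s} (degSqSum · s)
    (Set.toFinite _) ⟨R, ‹_›, rfl⟩
  exact ⟨R₁, hR₁, h_eq, fun R' hR' h => h_max R' ⟨hR', h⟩⟩

/- An extremal relation has a dominating or an isolated vertex; complementing if necessary, the
relation left after deleting it is still dense. -/
theorem degSqSum_le_sqrt_pairCount_cube [Finite V] (s : Finset V) (R : V → V → Prop) [Std.Symm R]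
    (hdense : (#s : ℝ) ^ 2 ≤ 2 * pairCount R s) : degSqSum R s ≤ √(pairCount R s) ^ 3 := by
  induction s using Finset.strongInduction generalizing R with
  | H s ih =>
    rcases s.eq_empty_or_nonempty with rfl | hs
    · simp [degSqSum, pairCount]
    obtain ⟨R₁, _, h_eq, h_max⟩ := exists_maximal_degSqSum R s
    refine (h_max R rfl).trans ?_
    rw [← h_eq] at hdense ⊢
    obtain ⟨v, hv, h_extreme⟩ := exists_dominating_or_isolated hs fun R' _ h =>
      h_max R' (h.trans h_eq)
    have hv' : v ∉ s.erase v := notMem_erase v s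
    have ih_erase := ih _ (erase_ssubset hv)
    rw [← insert_erase hv] at hdense ⊢
    rcases h_extreme with h_dom | h_iso
    · have h_dom : ∀ y ∈ s.erase v, R₁ v y := fun y hy =>
        h_dom y (mem_of_mem_erase hy) (ne_of_mem_erase hy)
      rcases le_total ((#(s.erase v) : ℝ) ^ 2) (2 * pairCount R₁ (s.erase v)) with h | h
      · exact degSqSum_insert_le_of_dominating hv' h_dom h (ih_erase R₁ h)
      · refine degSqSum_le_of_compl hdense (degSqSum_insert_le_of_isolated hv'
          (fun y hy => not_not_intro (h_dom y hy)) (ih_erase R₁ᶜ ?_))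
        rw [pairCount_compl]
        linarith
    · have h_iso : ∀ y ∈ s.erase v, ¬ R₁ v y := fun y hy =>
        h_iso y (mem_of_mem_erase hy) (ne_of_mem_erase hy)
      exact degSqSum_insert_le_of_isolated hv' h_iso
        (ih_erase R₁ (dense_of_dense_insert_of_isolated hv' h_iso hdense))

end AhlswedeKatona

section Indicator

variable {V : Type*}

/-- The real-valued indicator function of a set. -/
noncomputable def ind (X : Set V) : V → ℝ := X.indicator 1

theorem ind_nonneg (X : Set V) : 0 ≤ ind X := fun x => by
  rw [ind]
  exact Set.indicator_nonneg (fun _ _ => zero_le_one) x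

theorem ind_le_one (X : Set V) : ind X ≤ 1 := Set.indicator_le_self' fun _ _ => zero_le_one

theorem ind_add_ind_compl (X : Set V) : ind X + ind Xᶜ = 1 := Set.indicator_self_add_compl X 1

end Indicator

section CliqueDensity

/-- The limit of `P G / n ^ 5` when `G` is a clique on `√β * n` of its `n` vertices. -/
noncomputable def cliqueDensity (β : ℝ) : ℝ := β ^ ((3 : ℝ) / 2) - β ^ 2

theorem cliqueDensity_eq_sqrt {β : ℝ} (hβ : 0 ≤ β) : cliqueDensity β = √β ^ 3 - β ^ 2 := by
  rw [cliqueDensity, Real.sqrt_eq_rpow, ← Real.rpow_mul_natCast hβ]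
  norm_num

theorem continuous_max_cliqueDensity :
    Continuous fun β => max (cliqueDensity β) (cliqueDensity (1 - β)) := by
  have : Continuous cliqueDensity :=
    (Real.continuous_rpow_const (by norm_num)).sub (continuous_pow 2)
  fun_prop

end CliqueDensity

section AveragingOperator

open scoped BigOperators

variable {V : Type*} [Fintype V]

/-- The averaging operator of a relation: `relAvg R φ x` is the average over all `y : V` of `φ y`
if `R x y`, and of `0` otherwise. In particular `relAvg R 1 x` is the normalized degree of `x`. -/
noncomputable def relAvg (R : V → V → Prop) (φ : V → ℝ) (x : V) : ℝ :=
  𝔼 y, if R x y then φ y else 0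

/-- The proportion of ordered pairs, loops included, that are related by `R`. -/
noncomputable def relDensity (R : V → V → Prop) : ℝ := 𝔼 x, relAvg R 1 x

/-- The normalized number of walks `x, y, z` with `R x y` and `R y z`. -/
noncomputable def walk2 (R : V → V → Prop) : V → ℝ := relAvg R (relAvg R 1)

section Operator

variable (R : V → V → Prop) (φ ψ : V → ℝ) (x : V)

theorem relAvg_add : relAvg R (φ + ψ) x = relAvg R φ x + relAvg R ψ x := by
  simp only [relAvg, ← expect_add_distrib, Pi.add_apply, ite_add_ite, add_zero]

theorem relAvg_sub : relAvg R (φ - ψ) x = relAvg R φ x - relAvg R ψ x := by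
  simp only [relAvg, ← expect_sub_distrib, Pi.sub_apply, ite_sub_ite, sub_zero]

theorem relAvg_compl : relAvg Rᶜ φ x = 𝔼 y, φ y - relAvg R φ x := by
  rw [relAvg, relAvg, ← expect_sub_distrib]
  refine expect_congr rfl fun y _ => ?_
  by_cases h : R x y <;> simp [h]

variable {φ} in
theorem relAvg_nonneg (hφ : 0 ≤ φ) : 0 ≤ relAvg R φ x :=
  expect_nonneg fun y _ => ite_nonneg (hφ y) le_rfl

variable {φ} in
theorem relAvg_le_expect (hφ : 0 ≤ φ) : relAvg R φ x ≤ 𝔼 y, φ y :=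
  expect_le_expect fun y _ => by
    split_ifs
    exacts [le_rfl, hφ y]

theorem walk2_nonneg : 0 ≤ walk2 R x :=
  relAvg_nonneg R x fun y => relAvg_nonneg R y zero_le_one

theorem expect_mul_relAvg_comm [Std.Symm R] :
    𝔼 x, φ x * relAvg R ψ x = 𝔼 x, ψ x * relAvg R φ x := by
  simp only [relAvg, mul_expect]
  rw [expect_comm]
  refine expect_congr rfl fun y _ => expect_congr rfl fun x _ => ?_
  simp only [mul_ite, mul_zero, comm (r := R) (a := x), mul_comm]

variable {φ ψ} in
theorem expect_mul_relAvg_le (hφ : 0 ≤ φ) (hψ : 0 ≤ ψ) :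
    𝔼 x, ψ x * relAvg R φ x ≤ (𝔼 x, ψ x) * 𝔼 x, φ x := by
  rw [expect_mul]
  exact expect_le_expect fun x _ => mul_le_mul_of_nonneg_left (relAvg_le_expect R x hφ) (hψ x)

variable {φ ψ} in
theorem expect_mul_relAvg_sq_le (hφ : 0 ≤ φ) (hψ : 0 ≤ ψ) :
    𝔼 x, ψ x * relAvg R φ x ^ 2 ≤ (𝔼 x, φ x) * 𝔼 x, ψ x * relAvg R φ x := by
  rw [mul_expect]
  refine expect_le_expect fun x _ => ?_
  nlinarith [mul_nonneg (hψ x) (mul_nonneg (relAvg_nonneg R x hφ)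
    (sub_nonneg.2 (relAvg_le_expect R x hφ)))]

end Operator

theorem expect_eq_expect_ind_mul_add (X : Set V) (F : V → ℝ) :
    𝔼 x, F x = 𝔼 x, ind X x * F x + 𝔼 x, ind Xᶜ x * F x := by
  rw [← expect_add_distrib]
  refine expect_congr rfl fun x _ => ?_
  rw [← add_mul, ← Pi.add_apply, ind_add_ind_compl, Pi.one_apply, one_mul]

theorem relAvg_one_eq_add (R : V → V → Prop) (X : Set V) (x : V) :
    relAvg R 1 x = relAvg R (ind X) x + relAvg R (ind Xᶜ) x := by
  rw [← relAvg_add, ind_add_ind_compl]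

theorem expect_ind_add_expect_ind_compl [Nonempty V] (X : Set V) :
    𝔼 x, ind X x + 𝔼 x, ind Xᶜ x = 1 := by
  rw [← expect_add_distrib, ← Fintype.expect_one (ι := V)]
  exact expect_congr rfl fun x _ => congrFun (ind_add_ind_compl X) x

theorem relDensity_eq_add (R : V → V → Prop) [Std.Symm R] (X : Set V) :
    relDensity R = 𝔼 x, ind X x * relAvg R (ind X) x + 2 * 𝔼 x, ind X x * relAvg R (ind Xᶜ) x
      + 𝔼 x, ind Xᶜ x * relAvg R (ind Xᶜ) x := by
  rw [relDensity, expect_eq_expect_ind_mul_add X]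
  simp only [relAvg_one_eq_add R X, mul_add, expect_add_distrib]
  rw [expect_mul_relAvg_comm R (ind Xᶜ)]
  ring

theorem expect_ind_mul (X : Finset V) (F : V → ℝ) :
    𝔼 x, ind (X : Set V) x * F x = (∑ x ∈ X, F x) / Fintype.card V := by
  simp [Fintype.expect_eq_sum_div_card, ind, Set.indicator_apply]

theorem relAvg_ind (R : V → V → Prop) (X : Finset V) (x : V) :
    relAvg R (ind (X : Set V)) x = degIn R X x / Fintype.card V := by
  have : relAvg R (ind (X : Set V)) x = 𝔼 y, ind (X : Set V) y * if R x y then 1 else 0 := by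
    simp only [relAvg, mul_ite, mul_one, mul_zero]
  rw [this, expect_ind_mul, degIn, natCast_card_filter]

theorem exists_weighted_mean [Nonempty V] {u F : V → ℝ} {M : ℝ} (hu : 0 ≤ u) (hF : 0 ≤ F)
    (hFM : ∀ x, F x ≤ M) :
    ∃ m ∈ Set.Icc 0 M, 𝔼 x, u x * F x = (𝔼 x, u x) * m ∧
      (𝔼 x, u x) * m ^ 2 ≤ 𝔼 x, u x * F x ^ 2 := by
  have hM : 0 ≤ M := (hF (Classical.arbitrary V)).trans (hFM _)
  have h_nonneg : 0 ≤ 𝔼 x, u x * F x := expect_nonneg fun x _ => mul_nonneg (hu x) (hF x)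
  have h_le : 𝔼 x, u x * F x ≤ (𝔼 x, u x) * M := by
    rw [expect_mul]
    exact expect_le_expect fun x _ => mul_le_mul_of_nonneg_left (hFM x) (hu x)
  rcases (expect_nonneg fun x _ => hu x : 0 ≤ 𝔼 x, u x).eq_or_lt with h0 | hpos
  · rw [← h0, zero_mul] at h_le
    refine ⟨0, ⟨le_rfl, hM⟩, by linarith, ?_⟩
    simpa using expect_nonneg fun x _ => mul_nonneg (hu x) (sq_nonneg (F x))
  set m := (𝔼 x, u x * F x) / 𝔼 x, u x
  have h_mean : 𝔼 x, u x * F x = (𝔼 x, u x) * m := (mul_div_cancel₀ _ hpos.ne').symm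
  have h_variance : 𝔼 x, u x * (F x - m) ^ 2 = 𝔼 x, u x * F x ^ 2 - (𝔼 x, u x) * m ^ 2 := by
    have (x : V) : u x * (F x - m) ^ 2 = u x * F x ^ 2 - 2 * m * (u x * F x) + u x * m ^ 2 := by
      ring
    simp only [this, expect_add_distrib, expect_sub_distrib, ← mul_expect, ← expect_mul, h_mean]
    ring
  have : 0 ≤ 𝔼 x, u x * (F x - m) ^ 2 := expect_nonneg fun x _ => mul_nonneg (hu x) (sq_nonneg _)
  exact ⟨m, ⟨by positivity, (div_le_iff₀' hpos).2 h_le⟩, h_mean, by linarith⟩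

section Nonempty

variable [Nonempty V]

theorem relAvg_one_le_one (R : V → V → Prop) (x : V) : relAvg R 1 x ≤ 1 :=
  (relAvg_le_expect R x zero_le_one).trans_eq Fintype.expect_one

theorem relDensity_le_one (R : V → V → Prop) : relDensity R ≤ 1 :=
  expect_le univ_nonempty fun x _ => relAvg_one_le_one R x

theorem relAvg_one_compl (R : V → V → Prop) : relAvg Rᶜ 1 = 1 - relAvg R 1 := by
  ext x
  simp only [relAvg_compl, Pi.sub_apply, Pi.one_apply, Fintype.expect_const]

theorem relDensity_compl (R : V → V → Prop) : relDensity Rᶜ = 1 - relDensity R := by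
  simp only [relDensity, relAvg_one_compl, Pi.sub_apply, Pi.one_apply, expect_sub_distrib,
    Fintype.expect_const]

theorem walk2_compl (R : V → V → Prop) (x : V) :
    walk2 Rᶜ x = 1 - relDensity R - relAvg R 1 x + walk2 R x := by
  rw [walk2, relAvg_compl, ← relDensity, relDensity_compl, relAvg_one_compl, relAvg_sub, walk2]
  ring

end Nonempty

section CubeBound

variable {R : V → V → Prop} [Std.Symm R]

theorem expect_ind_mul_relAvg_sq_le (X : Set V)
    (hdense : (𝔼 x, ind X x) ^ 2 ≤ 2 * 𝔼 x, ind X x * relAvg R (ind X) x) :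
    𝔼 x, ind X x * relAvg R (ind X) x ^ 2 ≤ √(𝔼 x, ind X x * relAvg R (ind X) x) ^ 3 := by
  cases isEmpty_or_nonempty V
  · simp
  lift X to Finset V using X.toFinite
  set N : ℝ := (Fintype.card V : ℝ)
  have hN : 0 < N := Nat.cast_pos.2 Fintype.card_pos
  have h_mass : 𝔼 x, ind (X : Set V) x = #X / N := by simpa using expect_ind_mul X 1
  have h_pairs : 𝔼 x, ind (X : Set V) x * relAvg R (ind X) x = pairCount R X / N ^ 2 := by
    simp only [expect_ind_mul, relAvg_ind, ← sum_div, pairCount, div_div, sq, N]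
  have h_cherries : 𝔼 x, ind (X : Set V) x * relAvg R (ind X) x ^ 2 = degSqSum R X / N ^ 3 := by
    rw [expect_ind_mul X fun x => relAvg R (ind X) x ^ 2]
    simp only [relAvg_ind, div_pow, ← sum_div, degSqSum, div_div, ← pow_succ, N]
  rw [h_mass, h_pairs, div_pow, ← mul_div_assoc] at hdense
  rw [h_pairs, h_cherries, Real.sqrt_div (pairCount_nonneg R X), Real.sqrt_sq (by positivity),
    div_pow]
  gcongr
  refine degSqSum_le_sqrt_pairCount_cube X R ?_
  rw [div_le_div_iff_of_pos_right (by positivity)] at hdense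
  exact hdense

theorem expect_ind_mul_relAvg_sq_le_of_sparse (X : Set V)
    (hsparse : 2 * 𝔼 x, ind X x * relAvg R (ind X) x ≤ (𝔼 x, ind X x) ^ 2) :
    𝔼 x, ind X x * relAvg R (ind X) x ^ 2 ≤
      2 * (𝔼 x, ind X x * relAvg R (ind X) x) * 𝔼 x, ind X x - (𝔼 x, ind X x) ^ 3
        + √((𝔼 x, ind X x) ^ 2 - 𝔼 x, ind X x * relAvg R (ind X) x) ^ 3 := by
  have h_pairs : 𝔼 x, ind X x * relAvg Rᶜ (ind X) x =
      (𝔼 x, ind X x) ^ 2 - 𝔼 x, ind X x * relAvg R (ind X) x := by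
    simp only [relAvg_compl, mul_sub, expect_sub_distrib, ← expect_mul, sq]
  have h_cherries : 𝔼 x, ind X x * relAvg Rᶜ (ind X) x ^ 2 = (𝔼 x, ind X x) ^ 3
      - 2 * (𝔼 x, ind X x * relAvg R (ind X) x) * 𝔼 x, ind X x
      + 𝔼 x, ind X x * relAvg R (ind X) x ^ 2 := by
    have (x : V) : ind X x * relAvg Rᶜ (ind X) x ^ 2 = ind X x * (𝔼 y, ind X y) ^ 2
        - ind X x * relAvg R (ind X) x * (2 * 𝔼 y, ind X y) + ind X x * relAvg R (ind X) x ^ 2 := by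
      rw [relAvg_compl]
      ring
    simp only [this, expect_add_distrib, expect_sub_distrib, ← expect_mul]
    ring
  have := expect_ind_mul_relAvg_sq_le (R := Rᶜ) X (by rw [h_pairs]; linarith)
  rw [h_pairs, h_cherries] at this
  linarith

variable [Nonempty V]

theorem expect_relAvg_ind_sq_add_sub_sq_le (hR : 1 / 2 ≤ relDensity R) (X : Set V) :
    𝔼 x, (relAvg R (ind X) x ^ 2 + relAvg R (ind Xᶜ) x - relAvg R (ind Xᶜ) x ^ 2) ≤
      √(relDensity R) ^ 3 := by
  set ξ := ind X
  set η := ind Xᶜ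
  have hξ : 0 ≤ ξ := ind_nonneg X
  have hη : 0 ≤ η := ind_nonneg Xᶜ
  set x := 𝔼 v, ξ v
  set y := 𝔼 v, η v
  set α := 𝔼 v, ξ v * relAvg R ξ v
  have hx : 0 ≤ x := expect_nonneg fun v _ => hξ v
  have hy : 0 ≤ y := expect_nonneg fun v _ => hη v
  have hα : 0 ≤ α := expect_nonneg fun v _ => mul_nonneg (hξ v) (relAvg_nonneg R v hξ)
  have hxy : x + y = 1 := expect_ind_add_expect_ind_compl X
  have hαx : α ≤ x ^ 2 := (expect_mul_relAvg_le R hξ hξ).trans_eq (sq x).symm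
  have ha1 : √(relDensity R) ≤ 1 := Real.sqrt_le_one.2 (relDensity_le_one R)
  have ha2 : 1 / 2 ≤ √(relDensity R) ^ 2 := by rwa [Real.sq_sqrt (by linarith)]
  obtain ⟨g, ⟨hg, hgy⟩, h_cross, h_cross_sq⟩ :=
    exists_weighted_mean hξ (fun v => relAvg_nonneg R v hη) (fun v => relAvg_le_expect R v hη)
  obtain ⟨h, ⟨hh, hhy⟩, h_block, h_block_sq⟩ :=
    exists_weighted_mean hη (fun v => relAvg_nonneg R v hη) (fun v => relAvg_le_expect R v hη)
  have h_density : √(relDensity R) ^ 2 = α + 2 * (x * g) + y * h := by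
    rw [Real.sq_sqrt (by linarith), relDensity_eq_add R X, h_cross, h_block]
  have h_outer : 𝔼 v, η v * relAvg R ξ v ^ 2 ≤ x * (x * g) := by
    rw [← h_cross, ← expect_mul_relAvg_comm R η]
    exact expect_mul_relAvg_sq_le R hξ hη
  have h_twoBlock : 𝔼 v, ξ v * relAvg R ξ v ^ 2 + x * g * (1 + x - g) + y * h * (1 - h)
      ≤ √(relDensity R) ^ 3 := by
    rcases le_total (x ^ 2) (2 * α) with h_dense | h_sparse
    · exact twoBlock_le_of_dense hx hy hxy hg hh hα hαx h_dense (Real.sqrt_nonneg _) ha2 h_density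
        (expect_ind_mul_relAvg_sq_le X h_dense)
    · exact twoBlock_le_of_sparse hx hy hxy hgy hhy hα h_sparse (Real.sqrt_nonneg _) ha1 ha2
        h_density (expect_ind_mul_relAvg_sq_le_of_sparse X h_sparse)
  rw [expect_sub_distrib, expect_add_distrib, expect_eq_expect_ind_mul_add X,
    expect_eq_expect_ind_mul_add X (relAvg R η),
    expect_eq_expect_ind_mul_add X fun v => relAvg R η v ^ 2, h_cross, h_block]
  linarith

end CubeBound

/-- Twice the normalized number of `R`-walks of length two from `x` minus the normalized degree
of `x`. For symmetric `R` this differs from `walk2 R x + walk2 Rᶜ x` by a constant. -/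
noncomputable def excess (R : V → V → Prop) (x : V) : ℝ := 2 * walk2 R x - relAvg R 1 x

theorem excess_eq_relAvg (R : V → V → Prop) :
    excess R = relAvg R (relAvg R 1 + relAvg R 1 - 1) := by
  ext x
  rw [excess, walk2, relAvg_sub, relAvg_add]
  ring

theorem two_mul_expect_mul_relAvg_one_le (R : V → V → Prop) [Std.Symm R] {τ : V → ℝ}
    (hτ : 0 ≤ τ) (hτ1 : τ ≤ 1) :
    2 * 𝔼 x, τ x * relAvg R 1 x ≤ (𝔼 x, τ x) ^ 2 + relDensity R := by
  have h_inside : 𝔼 x, τ x * relAvg R τ x ≤ (𝔼 x, τ x) ^ 2 :=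
    (expect_mul_relAvg_le R hτ hτ).trans_eq (sq _).symm
  have h_outside : 0 ≤ 𝔼 x, (1 - τ) x * relAvg R (1 - τ) x := expect_nonneg fun x _ =>
    mul_nonneg (sub_nonneg.2 hτ1 x) (relAvg_nonneg R x (sub_nonneg.2 hτ1))
  have h_comm := expect_mul_relAvg_comm R 1 τ
  simp only [relAvg_sub, Pi.sub_apply, Pi.one_apply, sub_mul, mul_sub, one_mul,
    expect_sub_distrib] at h_outside h_comm
  rw [relDensity]
  linarith

variable [Nonempty V]

theorem neg_le_excess (R : V → V → Prop) (x : V) : -(1 - relDensity R) ≤ excess R x := by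
  have := walk2_compl R x
  rw [excess]
  linarith [walk2_nonneg R x, walk2_nonneg Rᶜ x]

section Dense

variable {R : V → V → Prop} [Std.Symm R] (hR : 1 / 2 ≤ relDensity R)
include hR

theorem excess_le (x : V) : excess R x ≤ √(relDensity R) * (2 * √(relDensity R) - 1) := by
  let d := relAvg R 1
  let τ := ind {y | 1 ≤ d y + d y}
  have hτ : 0 ≤ τ := ind_nonneg _
  have hτ1 : τ ≤ 1 := ind_le_one _
  have hd : 0 ≤ d := fun y => relAvg_nonneg R y zero_le_one
  have h_sq : √(relDensity R) ^ 2 = relDensity R := Real.sq_sqrt (by linarith)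
  have h_excess : excess R x ≤ 2 * 𝔼 y, τ y * d y - 𝔼 y, τ y := by
    rw [excess_eq_relAvg, relAvg, mul_expect, ← expect_sub_distrib]
    refine expect_le_expect fun y _ => ?_
    simp only [Pi.sub_apply, Pi.add_apply, Pi.one_apply, τ, ind, Set.indicator_apply,
      Set.mem_ofPred_eq]
    split_ifs <;> linarith
  refine h_excess.trans (two_mul_sub_le_of_two_mul_le_sq_add_sq (by rwa [h_sq]) ?_ ?_ ?_)
  · rw [h_sq]
    exact expect_le_expect fun y _ => mul_le_of_le_one_left (hd y) (hτ1 y)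
  · exact expect_le_expect fun y _ => mul_le_of_le_one_right (hτ y) (relAvg_one_le_one R y)
  · rw [h_sq]
    exact two_mul_expect_mul_relAvg_one_le R hτ hτ1

theorem expect_relAvg_one_sq_le : 𝔼 x, relAvg R 1 x ^ 2 ≤ √(relDensity R) ^ 3 := by
  have h_univ : ind (Set.univ : Set V) = 1 := Set.indicator_univ 1
  have := expect_ind_mul_relAvg_sq_le (R := R) Set.univ
  simp only [h_univ, Pi.one_apply, one_mul, Fintype.expect_const] at this
  exact this (by rw [← relDensity]; linarith)

theorem expect_ind_mul_excess_le (X : Set V) :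
    𝔼 x, ind X x * excess R x ≤
      √(relDensity R) ^ 3 - relDensity R + 𝔼 x, relAvg R 1 x ^ 2 := by
  have h_split (x : V) : (relAvg R 1 + relAvg R 1 - 1) x * relAvg R (ind X) x =
      (relAvg R (ind X) x ^ 2 + relAvg R (ind Xᶜ) x - relAvg R (ind Xᶜ) x ^ 2)
        - relAvg R 1 x + relAvg R 1 x ^ 2 := by
    simp only [Pi.sub_apply, Pi.add_apply, Pi.one_apply, relAvg_one_eq_add R X x]
    ring
  rw [excess_eq_relAvg, expect_mul_relAvg_comm R]
  simp only [h_split, expect_add_distrib _ _ fun x => relAvg R 1 x ^ 2,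
    expect_sub_distrib _ _ (relAvg R 1)]
  rw [← relDensity]
  gcongr
  exact expect_relAvg_ind_sq_add_sub_sq_le hR X

theorem walk2_mul_walk2_compl_le (x : V) :
    walk2 R x * walk2 Rᶜ x ≤ ((2 - √(relDensity R)) * (ind {y | 0 ≤ excess R y} x * excess R x)
      + 2 * (1 - relDensity R) * relAvg R 1 x - relAvg R 1 x ^ 2) / 4 := by
  have h_sq : √(relDensity R) ^ 2 = relDensity R := Real.sq_sqrt (by linarith)
  have h_excess : excess R x ^ 2 + 2 * (1 - relDensity R) * excess R x ≤
      (2 - √(relDensity R)) * (ind {y | 0 ≤ excess R y} x * excess R x) := by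
    have h_upper := excess_le hR x
    have h_lower := neg_le_excess R x
    simp only [ind, Set.indicator_apply, Set.mem_ofPred_eq, Pi.one_apply]
    split_ifs <;> nlinarith
  rw [excess] at h_excess ⊢
  rw [walk2_compl]
  linarith

theorem expect_walk2_mul_walk2_compl_le :
    𝔼 x, walk2 R x * walk2 Rᶜ x ≤ √(relDensity R) ^ 3 - relDensity R ^ 2 := by
  have h_sq : √(relDensity R) ^ 2 = relDensity R := Real.sq_sqrt (by linarith)
  have h_pos := expect_ind_mul_excess_le hR {y | 0 ≤ excess R y}
  have h_le := expect_le_expect fun x (_ : x ∈ univ) => walk2_mul_walk2_compl_le hR x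
  simp only [← expect_div, expect_sub_distrib, expect_add_distrib, ← mul_expect] at h_le
  rw [← relDensity] at h_le
  refine h_le.trans ?_
  have ha1 : √(relDensity R) ≤ 1 := Real.sqrt_le_one.2 (relDensity_le_one R)
  have h_mul_pos := mul_le_mul_of_nonneg_left h_pos (by linarith : 0 ≤ 2 - √(relDensity R))
  have h_mul_sq := mul_le_mul_of_nonneg_left (expect_relAvg_one_sq_le hR) (sub_nonneg.2 ha1)
  linear_combination (h_mul_pos + h_mul_sq) / 4
    - (2 * (√(relDensity R) ^ 2 + relDensity R) + √(relDensity R)) / 4 * h_sq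

end Dense

theorem expect_walk2_mul_walk2_compl_le_max (R : V → V → Prop) [Std.Symm R] :
    𝔼 x, walk2 R x * walk2 Rᶜ x ≤
      max (cliqueDensity (relDensity R)) (cliqueDensity (1 - relDensity R)) := by
  rcases le_total (1 / 2) (relDensity R) with h | h
  · rw [cliqueDensity_eq_sqrt (by linarith)]
    exact le_max_of_le_left (expect_walk2_mul_walk2_compl_le h)
  · have h_compl := expect_walk2_mul_walk2_compl_le (R := Rᶜ) (by rw [relDensity_compl]; linarith)
    simp only [compl_compl, mul_comm (walk2 Rᶜ _), relDensity_compl] at h_compl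
    rw [← cliqueDensity_eq_sqrt (by linarith)] at h_compl
    exact le_max_of_le_right h_compl

end AveragingOperator

section Graph

open scoped BigOperators

variable {V : Type*} [Fintype V] {n : ℕ}

theorem relAvg_one (R : V → V → Prop) (x : V) :
    relAvg R 1 x = degIn R univ x / Fintype.card V := by
  simp [relAvg, degIn, Fintype.expect_eq_sum_div_card]

theorem relDensity_eq_pairCount_div (R : V → V → Prop) :
    relDensity R = pairCount R univ / Fintype.card V ^ 2 := by
  simp only [relDensity, relAvg_one, Fintype.expect_eq_sum_div_card, ← sum_div, pairCount,
    div_div, sq]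

theorem walk2_eq_card_div (R : V → V → Prop) (x : V) :
    walk2 R x = #{p : V × V | R x p.1 ∧ R p.1 p.2} / (Fintype.card V : ℝ) ^ 2 := by
  have h_card : (#{p : V × V | R x p.1 ∧ R p.1 p.2} : ℝ) =
      ∑ y, (if R x y then degIn R univ y else 0) := by
    rw [natCast_card_filter, Fintype.sum_prod_type]
    refine sum_congr rfl fun y _ => ?_
    by_cases h : R x y <;> simp [h, degIn]
  rw [h_card, walk2, relAvg, Fintype.expect_eq_sum_div_card, sq, ← div_div]
  simp only [relAvg_one, sum_div, ite_div, zero_div]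

theorem pairCount_adj (G : SimpleGraph V) : pairCount G.Adj univ = 2 * #G.edgeFinset := by
  have h_degree (x : V) : degIn G.Adj univ x = G.degree x := by
    rw [degIn, ← G.card_neighborFinset_eq_degree, neighborFinset_eq_filter]
  simp only [pairCount, h_degree]
  exact_mod_cast G.sum_degrees_eq_twice_card_edges

theorem relDensity_adj (hn : 2 ≤ n) (G : SimpleGraph (Fin n)) :
    relDensity G.Adj = density G * (1 - 1 / n) := by
  have : (2 : ℝ) ≤ n := mod_cast hn
  have : (n : ℝ) - 1 ≠ 0 := by linarith
  rw [relDensity_eq_pairCount_div, pairCount_adj, density, Nat.cast_choose_two, Fintype.card_fin]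
  field_simp

theorem P_le_sum_card_mul_card (G : SimpleGraph (Fin n)) :
    P G ≤ ∑ x, #{p : Fin n × Fin n | G.Adj x p.1 ∧ G.Adj p.1 p.2} *
      #{p : Fin n × Fin n | G.Adjᶜ x p.1 ∧ G.Adjᶜ p.1 p.2} := by
  simp only [← card_product, ← card_sigma]
  refine card_le_card_of_injOn (fun v => ⟨v 2, (v 1, v 0), (v 3, v 4)⟩) ?_ ?_
  · intro v hv
    simp_all [adj_comm]
  · intro v _ w _ h
    simp only [Sigma.mk.injEq, heq_eq_eq, Prod.mk.injEq] at h
    ext i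
    fin_cases i <;> simp_all

theorem P_div_le_expect (G : SimpleGraph (Fin n)) :
    (P G : ℝ) / n ^ 5 ≤ 𝔼 x, walk2 G.Adj x * walk2 G.Adjᶜ x := by
  simp only [walk2_eq_card_div, Fintype.expect_eq_sum_div_card, div_mul_div_comm, ← sum_div,
    div_div, ← pow_succ, ← pow_add, Fintype.card_fin]
  gcongr
  exact_mod_cast P_le_sum_card_mul_card G

theorem P_div_le_max_cliqueDensity (hn : n ≠ 0) (G : SimpleGraph (Fin n)) :
    (P G : ℝ) / n ^ 5 ≤
      max (cliqueDensity (relDensity G.Adj)) (cliqueDensity (1 - relDensity G.Adj)) := by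
  have : NeZero n := ⟨hn⟩
  have : Std.Symm G.Adj := G.symm
  exact (P_div_le_expect G).trans (expect_walk2_mul_walk2_compl_le_max G.Adj)

theorem P_le_P_compl (G : SimpleGraph (Fin n)) : P G ≤ P Gᶜ := by
  refine card_le_card_of_injOn (fun v => v ∘ Fin.rev) ?_ fun v _ w _ h =>
    Fin.rev_surjective.injective_comp_right h
  intro v hv
  simp only [coe_filter, mem_univ, true_and, Set.mem_ofPred_eq] at hv ⊢
  obtain ⟨h_inj, h01, h12, h23, h34⟩ := hv
  simp [h_inj.comp Fin.rev_injective, h_inj.eq_iff, Fin.rev, h01.symm, h12.symm,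
    mt Adj.symm h23, mt Adj.symm h34]

theorem card_edgeFinset_compl_add (G : SimpleGraph V) [Fintype G.edgeSet] [Fintype Gᶜ.edgeSet] :
    #Gᶜ.edgeFinset + #G.edgeFinset = (Fintype.card V).choose 2 := by
  have h_sdiff : Gᶜ.edgeFinset = (⊤ : SimpleGraph V).edgeFinset \ G.edgeFinset := by
    rw [← coe_inj, coe_sdiff]
    simp only [coe_edgeFinset, ← edgeSet_sdiff, top_sdiff]
  rw [h_sdiff, card_sdiff_add_card_eq_card (edgeFinset_mono le_top),
    card_edgeFinset_top_eq_card_choose_two]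

theorem density_compl (hn : 2 ≤ n) (G : SimpleGraph (Fin n)) : density Gᶜ = 1 - density G := by
  have h_choose : (n.choose 2 : ℝ) ≠ 0 := Nat.cast_ne_zero.2 (Nat.choose_pos hn).ne'
  rw [eq_sub_iff_add_eq, density, density, ← add_div, ← Nat.cast_add, card_edgeFinset_compl_add,
    Fintype.card_fin, div_self h_choose]

end Graph

section UpperBound

variable {G : (n : ℕ) → SimpleGraph (Fin n)} {β : ℝ}
  (hG : Tendsto (fun n => density (G n)) atTop (nhds β))
include hG

theorem tendsto_relDensity_adj :
    Tendsto (fun n => relDensity (G n).Adj) atTop (nhds β) := by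
  have := hG.mul (tendsto_one_div_atTop_nhds_zero_nat.const_sub 1)
  rw [sub_zero, mul_one] at this
  exact this.congr' ((eventually_ge_atTop 2).mono fun n hn => (relDensity_adj hn (G n)).symm)

theorem eventually_P_div_lt {c : ℝ} (hc : max (cliqueDensity β) (cliqueDensity (1 - β)) < c) :
    ∀ᶠ n in atTop, (P (G n) : ℝ) / n ^ 5 < c := by
  have h_bound := (continuous_max_cliqueDensity.tendsto β).comp (tendsto_relDensity_adj hG)
  filter_upwards [h_bound.eventually_lt_const hc, eventually_ne_atTop 0] with n hlt hn
  exact (P_div_le_max_cliqueDensity hn (G n)).trans_lt hlt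

theorem limsup_P_div_le :
    limsup (fun n => (P (G n) : ℝ) / n ^ 5) atTop ≤
      max (cliqueDensity β) (cliqueDensity (1 - β)) := by
  have h_nonneg (n : ℕ) : 0 ≤ (P (G n) : ℝ) / n ^ 5 := by positivity
  exact le_of_forall_gt_imp_ge_of_dense fun c hc => limsup_le_of_le
    (isCoboundedUnder_le_of_le _ h_nonneg) ((eventually_P_div_lt hG hc).mono fun n => le_of_lt)

end UpperBound

section Clique

/-- The graph on `V` in which the vertices of `S` form a clique and all others are isolated. -/
noncomputable def cliqueOn {V : Type*} (S : Finset V) : SimpleGraph V :=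
  (⊤ : SimpleGraph S).map (Function.Embedding.subtype (· ∈ S))

theorem cliqueOn_adj {V : Type*} {S : Finset V} {x y : V} :
    (cliqueOn S).Adj x y ↔ x ∈ S ∧ y ∈ S ∧ x ≠ y := by
  rw [cliqueOn, map_adj]
  simp [and_comm, and_left_comm]

theorem card_edgeFinset_cliqueOn {V : Type*} (S : Finset V)
    [Fintype (cliqueOn S).edgeSet] : #(cliqueOn S).edgeFinset = (#S).choose 2 := by
  have h_map : (cliqueOn S).edgeFinset =
      (⊤ : SimpleGraph S).edgeFinset.map (Function.Embedding.subtype (· ∈ S)).sym2Map := by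
    rw [← coe_inj, coe_map, coe_edgeFinset, coe_edgeFinset]
    exact edgeSet_map _ _
  rw [h_map, card_map, card_edgeFinset_top_eq_card_choose_two, Fintype.card_coe]

variable {n : ℕ}

theorem card_filter_not_injective (k : ℕ) :
    #{v : Fin k → Fin n | ¬ v.Injective} = n ^ k - n.descFactorial k := by
  have h_inj : #{v : Fin k → Fin n | v.Injective} = n.descFactorial k := by
    rw [← Fintype.card_subtype, Fintype.card_congr (Equiv.subtypeInjectiveEquivEmbedding _ _),
      Fintype.card_embedding_eq, Fintype.card_fin, Fintype.card_fin]
  rw [← h_inj]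
  refine eq_tsub_of_add_eq ?_
  rw [add_comm, card_filter_add_card_filter_not, card_univ, Fintype.card_fun, Fintype.card_fin,
    Fintype.card_fin]

theorem card_pow_mul_le_P_cliqueOn_add (S : Finset (Fin n)) :
    #S ^ 3 * (n - #S) * n ≤ P (cliqueOn S) + (n ^ 5 - n.descFactorial 5) := by
  have h_card : #(Fintype.piFinset ![S, S, S, Sᶜ, univ]) = #S ^ 3 * (n - #S) * n := by
    simp [Fintype.card_piFinset, Fin.prod_univ_five, card_compl, pow_succ]
  rw [← h_card, ← card_filter_not_injective]
  refine (card_le_card fun v hv => ?_).trans (card_union_le _ _)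
  simp only [Fintype.mem_piFinset, Fin.forall_fin_succ] at hv
  have h_mem : v 0 ∈ S ∧ v 1 ∈ S ∧ v 2 ∈ S ∧ v 3 ∉ S := by simpa using hv
  simp only [mem_union, mem_filter, mem_univ, true_and, cliqueOn_adj]
  by_cases h_inj : v.Injective
  · simp [h_inj, h_inj.eq_iff, h_mem]
  · exact Or.inr h_inj

section Limits

variable {S : (n : ℕ) → Finset (Fin n)} {s : ℝ}
  (hS : Tendsto (fun n => (#(S n) : ℝ) / n) atTop (nhds s))
include hS

theorem tendsto_density_cliqueOn :
    Tendsto (fun n => density (cliqueOn (S n))) atTop (nhds (s ^ 2)) := by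
  have h_inv := tendsto_one_div_atTop_nhds_zero_nat (𝕜 := ℝ)
  have h_lim := (hS.mul (hS.sub h_inv)).div (h_inv.const_sub 1) (by norm_num)
  rw [sub_zero, sub_zero, div_one, ← sq] at h_lim
  refine h_lim.congr' ?_
  filter_upwards [eventually_ge_atTop 2] with n hn
  have : (2 : ℝ) ≤ n := mod_cast hn
  have : (n : ℝ) - 1 ≠ 0 := by linarith
  rw [density, card_edgeFinset_cliqueOn, Nat.cast_choose_two, Nat.cast_choose_two, Pi.div_apply]
  field_simp

theorem eventually_lt_P_cliqueOn_div {c : ℝ} (hc : c < s ^ 3 * (1 - s)) :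
    ∀ᶠ n in atTop, c < (P (cliqueOn (S n)) : ℝ) / n ^ 5 := by
  have h_ne : ∀ᶠ n : ℕ in atTop, (n : ℝ) ^ 5 ≠ 0 :=
    (eventually_ne_atTop 0).mono fun n hn => pow_ne_zero 5 (Nat.cast_ne_zero.2 hn)
  have h_desc := (Asymptotics.isEquivalent_iff_tendsto_one h_ne).1 (isEquivalent_descFactorial 5)
  have h_lim := ((hS.pow 3).mul (hS.const_sub 1)).sub (h_desc.const_sub 1)
  rw [sub_self, sub_zero] at h_lim
  filter_upwards [h_lim.eventually_const_lt hc, eventually_ne_atTop 0] with n hlt hn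
  have h_card : #(S n) ≤ n := (card_le_univ _).trans_eq (Fintype.card_fin n)
  have h_count := (Nat.cast_le (α := ℝ)).2 (card_pow_mul_le_P_cliqueOn_add (S n))
  push_cast [Nat.cast_sub h_card, Nat.cast_sub (Nat.descFactorial_le_pow n 5)] at h_count
  refine hlt.trans_le ((le_div_iff₀ (by positivity)).2 ?_)
  refine le_of_eq_of_le ?_ (sub_le_iff_le_add.2 h_count)
  simp only [Pi.div_apply]
  field_simp

end Limits

theorem exists_card_div_tendsto {s : ℝ} (hs : 0 ≤ s) (hs1 : s ≤ 1) :
    ∃ S : (n : ℕ) → Finset (Fin n), Tendsto (fun n => (#(S n) : ℝ) / n) atTop (nhds s) := by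
  refine ⟨fun n => {i | i < ⌊s * n⌋₊},
    ((tendsto_nat_floor_mul_div_atTop hs).comp tendsto_natCast_atTop_atTop).congr fun n => ?_⟩
  have h_floor : ⌊s * n⌋₊ ≤ n := Nat.floor_le_of_le (mul_le_of_le_one_left n.cast_nonneg hs1)
  rw [Fin.card_filter_val_lt, min_eq_right h_floor, Function.comp_apply]

theorem exists_tendsto_density_and_eventually_lt_P_div {β : ℝ} (hβ : 0 ≤ β) (hβ1 : β ≤ 1) :
    ∃ G : (n : ℕ) → SimpleGraph (Fin n), Tendsto (fun n => density (G n)) atTop (nhds β) ∧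
      ∀ c < cliqueDensity β, ∀ᶠ n in atTop, c < (P (G n) : ℝ) / n ^ 5 := by
  obtain ⟨S, hS⟩ := exists_card_div_tendsto (Real.sqrt_nonneg β) (Real.sqrt_le_one.2 hβ1)
  have h_density := tendsto_density_cliqueOn hS
  have h_cliqueDensity : cliqueDensity β = √β ^ 3 * (1 - √β) := by
    rw [cliqueDensity_eq_sqrt hβ]
    linear_combination (√β ^ 2 + β) * Real.sq_sqrt hβ
  rw [Real.sq_sqrt hβ] at h_density
  exact ⟨fun n => cliqueOn (S n), h_density, fun c hc =>
    eventually_lt_P_cliqueOn_div hS (hc.trans_eq h_cliqueDensity)⟩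

end Clique

theorem tendsto_density_compl {G : (n : ℕ) → SimpleGraph (Fin n)} {β : ℝ}
    (hG : Tendsto (fun n => density (G n)) atTop (nhds β)) :
    Tendsto (fun n => density (G n)ᶜ) atTop (nhds (1 - β)) :=
  (hG.const_sub 1).congr'
    ((eventually_ge_atTop 2).mono fun n hn => (density_compl hn (G n)).symm)

theorem exists_tendsto_density_and_eventually_lt_P_div_max {β : ℝ} (hβ : 0 ≤ β) (hβ1 : β ≤ 1) :
    ∃ G : (n : ℕ) → SimpleGraph (Fin n), Tendsto (fun n => density (G n)) atTop (nhds β) ∧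
      ∀ c < max (cliqueDensity β) (cliqueDensity (1 - β)),
        ∀ᶠ n in atTop, c < (P (G n) : ℝ) / n ^ 5 := by
  rcases le_total (cliqueDensity (1 - β)) (cliqueDensity β) with h | h
  · rw [max_eq_left h]
    exact exists_tendsto_density_and_eventually_lt_P_div hβ hβ1
  · rw [max_eq_right h]
    obtain ⟨G, h_density, h_lt⟩ := exists_tendsto_density_and_eventually_lt_P_div
      (sub_nonneg.2 hβ1) (sub_le_self 1 hβ)
    refine ⟨fun n => (G n)ᶜ, by simpa using tendsto_density_compl h_density, fun c hc => ?_⟩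
    filter_upwards [h_lt c hc] with n hn
    refine hn.trans_le ?_
    gcongr
    exact P_le_P_compl (G n)

/-- `I(P_{EENN}, β) = max{β^{3/2} − β², (1−β)^{3/2} − (1−β)²}`: every sequence of graphs
with edge density tending to `β` has `limsup P(G_n)/n⁵` at most this value, and the bound
is attained by some sequence. -/
theorem stmt_15 (β : ℝ) (hβ0 : 0 ≤ β) (hβ1 : β ≤ 1) :
    (∀ G : (n : ℕ) → SimpleGraph (Fin n),
      Tendsto (fun n => density (G n)) atTop (nhds β) →
      limsup (fun n => (P (G n) : ℝ) / (n : ℝ) ^ 5) atTop ≤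
        max (β ^ ((3 : ℝ) / 2) - β ^ 2) ((1 - β) ^ ((3 : ℝ) / 2) - (1 - β) ^ 2)) ∧
    (∃ G : (n : ℕ) → SimpleGraph (Fin n),
      Tendsto (fun n => density (G n)) atTop (nhds β) ∧
      Tendsto (fun n => (P (G n) : ℝ) / (n : ℝ) ^ 5) atTop
        (nhds (max (β ^ ((3 : ℝ) / 2) - β ^ 2)
          ((1 - β) ^ ((3 : ℝ) / 2) - (1 - β) ^ 2)))) := by
  obtain ⟨G, h_density, h_lower⟩ := exists_tendsto_density_and_eventually_lt_P_div_max hβ0 hβ1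
  exact ⟨fun G hG => limsup_P_div_le hG, G, h_density,
    tendsto_order.2 ⟨h_lower, fun c hc => eventually_P_div_lt h_density hc⟩⟩
end

section
/- Let G be a finite simple graph on n vertices whose average degree d = 2m/n (where m is the number of edges) satisfies d ≥ n/2. Then S(G) ≤ n·d²·(n−d). -/
open Finset SimpleGraph
open scoped Classical

/-- `S G` is the number of ordered quadruples `(v,a,b,c)` of pairwise distinct vertices
with `va`, `vb` edges and `vc` a non-edge (labeled copies of the star `S_{2,1}`). -/
noncomputable def S {n : ℕ} (G : SimpleGraph (Fin n)) : ℕ :=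
  Finset.card <| (Finset.univ : Finset (Fin n × Fin n × Fin n × Fin n)).filter
    fun p =>
      p.1 ≠ p.2.1 ∧ p.1 ≠ p.2.2.1 ∧ p.1 ≠ p.2.2.2 ∧
      p.2.1 ≠ p.2.2.1 ∧ p.2.1 ≠ p.2.2.2 ∧ p.2.2.1 ≠ p.2.2.2 ∧
      G.Adj p.1 p.2.1 ∧ G.Adj p.1 p.2.2.1 ∧ ¬ G.Adj p.1 p.2.2.2

/-!
Choosing `a ≠ b` among the neighbours of `v` and `c ≠ v` among its non-neighbours gives
`S G = ∑ v, k (k - 1) (n - 1 - k)` with `k = deg v`. Since `k (k - 1) (n - 1 - k)` is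
`k² (n - k) - (n - 1) k` and the degrees average `d`, the claim is a Jensen inequality for
`f x = x² (n - x)`. This `f` is not concave on `[0, n]`, but it lies below its tangent line `T` at
`d` wherever `n ≤ x + 2 d`, because `T x - f x = (x - d)² (x + 2 d - n)`. For `d ≥ n / 2` this is
every `x ≥ 0`; in general it suffices to have it at the minimum degree.
-/

theorem sum_sq_mul_sub_le_card_mul {ι R : Type*} [CommRing R] [LinearOrder R]
    [IsStrictOrderedRing R] {s : Finset ι} {x : ι → R} {a d : R} (hsum : ∑ i ∈ s, x i = #s * d)
    (hx : ∀ i ∈ s, a ≤ x i + 2 * d) :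
    ∑ i ∈ s, x i ^ 2 * (a - x i) ≤ #s * (d ^ 2 * (a - d)) := by
  have tangent_line (i) (hi : i ∈ s) :
      x i ^ 2 * (a - x i) ≤ d ^ 2 * (a - d) + (2 * a * d - 3 * d ^ 2) * (x i - d) := by
    have hgap : 0 ≤ (x i - d) ^ 2 * (x i + 2 * d - a) :=
      mul_nonneg (sq_nonneg _) (sub_nonneg.2 (hx i hi))
    linear_combination hgap
  calc ∑ i ∈ s, x i ^ 2 * (a - x i)
    _ ≤ ∑ i ∈ s, (d ^ 2 * (a - d) + (2 * a * d - 3 * d ^ 2) * (x i - d)) :=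
        sum_le_sum tangent_line
    _ = #s * (d ^ 2 * (a - d)) := by
        simp [sum_add_distrib, ← mul_sum, hsum]

theorem cast_card_offDiag {α R : Type*} [Ring R] (s : Finset α) :
    (#s.offDiag : R) = #s * (#s - 1) := by
  rw [offDiag_card, Nat.cast_sub (Nat.le_mul_self _), Nat.cast_mul, mul_sub_one]

section Degrees

variable {V : Type*} [Fintype V] (G : SimpleGraph V) [DecidableRel G.Adj]

theorem cast_degree_compl {R : Type*} [AddGroupWithOne R] (v : V)
    [Fintype (Gᶜ.neighborSet v)] :
    (Gᶜ.degree v : R) = Fintype.card V - 1 - G.degree v := by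
  have hdeg : G.degree v ≤ Fintype.card V - 1 := Nat.le_sub_one_of_lt (G.degree_lt_card_verts v)
  rw [degree_compl, Nat.cast_sub hdeg, Nat.cast_pred (Fintype.card_pos_iff.2 ⟨v⟩)]

theorem sum_degrees_eq_card_mul_average {K : Type*} [Semifield K] [CharZero K] :
    ∑ v, (G.degree v : K) = Fintype.card V * (2 * #G.edgeFinset / Fintype.card V) := by
  cases isEmpty_or_nonempty V
  · simp
  · rw [mul_div_cancel₀ _ (Nat.cast_ne_zero.2 Fintype.card_ne_zero)]
    exact_mod_cast G.sum_degrees_eq_twice_card_edges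

end Degrees

section StarCount

variable {n : ℕ} (G : SimpleGraph (Fin n))

theorem S_eq_sum_card_offDiag_mul_degree_compl :
    S G = ∑ v, #(G.neighborFinset v).offDiag * Gᶜ.degree v := by
  simp_rw [← card_neighborFinset_eq_degree, ← card_product, ← card_sigma]
  refine card_nbij' (fun p ↦ ⟨p.1, (p.2.1, p.2.2.1), p.2.2.2⟩)
    (fun q ↦ (q.1, q.2.1.1, q.2.1.2, q.2.2)) ?_ ?_ (fun _ _ ↦ rfl) (fun _ _ ↦ rfl)
  · rintro ⟨v, a, b, c⟩ h
    simp only [ne_eq, coe_filter, mem_univ, true_and, Set.mem_ofPred_eq, coe_sigma, coe_univ,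
      coe_product, coe_offDiag, coe_neighborFinset, Set.mem_sigma_iff, Set.mem_univ, Set.mem_prod,
      Set.mem_offDiag, mem_neighborSet, compl_adj] at h ⊢
    tauto
  · rintro ⟨v, ⟨a, b⟩, c⟩ h
    simp only [coe_sigma, coe_univ, coe_product, coe_offDiag, coe_neighborFinset,
      Set.mem_sigma_iff, Set.mem_univ, Set.mem_prod, Set.mem_offDiag, mem_neighborSet, compl_adj,
      true_and, coe_filter, mem_univ, Set.mem_ofPred_eq] at h ⊢
    obtain ⟨⟨hva, hvb, hab⟩, hvc, hnadj⟩ := h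
    have hac : a ≠ c := fun h ↦ hnadj (h ▸ hva)
    have hbc : b ≠ c := fun h ↦ hnadj (h ▸ hvb)
    exact ⟨hva.ne, hvb.ne, hvc, hab, hac, hbc, hva, hvb, hnadj⟩

theorem S_eq_sum_degree {R : Type*} [Ring R] :
    (S G : R) = ∑ v, (G.degree v : R) * (G.degree v - 1) * (n - 1 - G.degree v) := by
  simp only [S_eq_sum_card_offDiag_mul_degree_compl, Nat.cast_sum, Nat.cast_mul,
    cast_card_offDiag, cast_degree_compl, card_neighborFinset_eq_degree, Fintype.card_fin]

end StarCount

theorem stmt_18_general (n : ℕ) (G : SimpleGraph (Fin n)) (d : ℝ)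
    (hd : d = 2 * (G.edgeFinset.card : ℝ) / (n : ℝ))
    (hmin : (n : ℝ) ≤ G.minDegree + 2 * d) :
    (S G : ℝ) ≤ n * (d * (d - 1) * (n - 1 - d)) := by
  have hsum : ∑ v, (G.degree v : ℝ) = n * d := by
    simpa [hd] using sum_degrees_eq_card_mul_average (K := ℝ) G
  have hdeg (v : Fin n) : (n : ℝ) ≤ G.degree v + 2 * d := by
    grw [hmin, G.minDegree_le_degree v]
  calc (S G : ℝ)
    _ = ∑ v, (G.degree v : ℝ) ^ 2 * (n - G.degree v) - (n - 1) * ∑ v, (G.degree v : ℝ) := by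
        rw [S_eq_sum_degree, mul_sum, ← sum_sub_distrib]
        exact sum_congr rfl fun v _ ↦ by ring
    _ ≤ n * (d ^ 2 * (n - d)) - (n - 1) * (n * d) := by
        rw [hsum]
        gcongr
        simpa using sum_sq_mul_sub_le_card_mul (s := univ) (by simpa using hsum) fun v _ ↦ hdeg v
    _ = n * (d * (d - 1) * (n - 1 - d)) := by ring

/-- If `G` is a graph on `n` vertices with average degree `d = 2m/n ≥ n/2`, then
`S(G) ≤ n d² (n − d)`. -/
theorem stmt_18 (n : ℕ) (G : SimpleGraph (Fin n)) (d : ℝ)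
    (hd : d = 2 * (G.edgeFinset.card : ℝ) / (n : ℝ))
    (hhalf : (n : ℝ) / 2 ≤ d) :
    (S G : ℝ) ≤ (n : ℝ) * d ^ 2 * ((n : ℝ) - d) := by
  have hmin : (n : ℝ) ≤ G.minDegree + 2 * d := by linarith [(G.minDegree).cast_nonneg (α := ℝ)]
  have hd_nonneg : 0 ≤ d := hd ▸ by positivity
  have hn : (n : ℝ) ≤ n * n := mod_cast n.le_mul_self
  linarith [stmt_18_general n G d hd hmin, mul_le_mul_of_nonneg_right hn hd_nonneg]
end
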